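/- arXiv:1008.2059 — 2 statements merged into one kernel-verified Lean document; each statement's English description precedes it below -/
import Mathlib

section
/- Let R' and R be finite S_ℚ-rings and let ι : R' → R be an injective ring homomorphism whose cokernel (as an abelian group) is finite of cardinality d, so that R' may be identified with a subring of finite index d in R. Let p be a prime, and let f_p and f_p' denote the number of ring homomorphisms to F̄_p from R and from R' respectively. Then f_p ≥ f_p' ≥ f_p − ν_p(d). -/
theorem aux_vs (p : ℕ) [Fact p.Prime] (K : Type*) [Field K] [Algebra (ZMod p) K]
    (B : Type*) [AddCommGroup B] [Finite B] (_ : Module (ZMod p) B) :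
    ∃ (r : ℕ) (b : Fin r → B), Nat.card B = p ^ r ∧
      ∀ f : B →+ K, (∀ i, f (b i) = 0) → f = 0 := by
  have : Module.Finite (ZMod p) B := Module.Finite.of_finite
  let b := Module.finBasis (ZMod p) B
  refine ⟨_, b, ?_, ?_⟩
  · rw [Module.natCard_eq_pow_finrank (K := ZMod p), Nat.card_zmod]
  · intro f hf
    have hg : f.toZModLinearMap p = 0 := b.ext fun i => hf i
    ext x
    exact LinearMap.congr_fun hg x

theorem aux_gens (p : ℕ) [Fact p.Prime] (K : Type*) [Field K] [Algebra (ZMod p) K]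
    (A : Type*) [AddCommGroup A] [Finite A] :
    ∃ (r : ℕ) (a : Fin r → A), r ≤ padicValNat p (Nat.card A) ∧
      ∀ f : A →+ K, (∀ i, f (a i) = 0) → f = 0 := by
  let H : AddSubgroup A := (nsmulAddMonoidHom (α := A) p).range
  let : Module (ZMod p) (A ⧸ H) := QuotientAddGroup.zmodModule (fun x => ⟨x, rfl⟩)
  obtain ⟨r, b, hc, hb⟩ := aux_vs p K (A ⧸ H) this
  choose a ha using fun i => QuotientAddGroup.mk_surjective (b i)
  refine ⟨r, a, ?_, ?_⟩
  · rw [← padicValNat_dvd_iff_le Nat.card_pos.ne', ← hc]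
    exact AddSubgroup.card_quotient_dvd_card H
  · intro f hf
    have hH : H ≤ f.ker := by
      rintro _ ⟨x, rfl⟩
      have : CharP K p := charP_of_injective_algebraMap (algebraMap (ZMod p) K).injective p
      simp [AddMonoidHom.mem_ker]
    have hg := hb (QuotientAddGroup.lift H f hH) (fun i => by rw [← ha]; exact hf i)
    ext x
    exact DFunLike.congr_fun hg (QuotientAddGroup.mk x)

theorem aux_surj (R' R : Type*) [CommRing R'] [CommRing R] [Module.Finite ℤ R]
    (ι : R' →+* R) (hinj : Function.Injective ι) (K : Type*) [Field K] [IsAlgClosed K] :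
    Function.Surjective (fun φ : R →+* K => φ.comp ι) := by
  intro ψ
  let : Algebra R' R := ι.toAlgebra
  have : Algebra.IsIntegral R' R := Algebra.IsIntegral.tower_top (R := ℤ)
  have : (RingHom.ker ψ).IsPrime := RingHom.ker_isPrime ψ
  obtain ⟨Q, -, hQ, hQP⟩ := Ideal.exists_ideal_over_prime_of_isIntegral (S := R)
    (RingHom.ker ψ) ⊥ (by
      rw [← RingHom.ker_eq_comap_bot, (RingHom.injective_iff_ker_eq_bot (algebraMap R' R)).1 hinj]
      exact bot_le)
  let P := RingHom.ker ψ
  have : Q.LiesOver P := ⟨hQP.symm⟩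
  let : Algebra (R' ⧸ P) K := (RingHom.kerLift ψ).toAlgebra
  have : IsDomain (R' ⧸ P) := Ideal.Quotient.isDomain P
  have : FaithfulSMul (R' ⧸ P) K :=
    (faithfulSMul_iff_algebraMap_injective _ _).2 (RingHom.kerLift_injective ψ)
  have : Algebra.IsIntegral (R' ⧸ P) (R ⧸ Q) := inferInstance
  have : FaithfulSMul (R' ⧸ P) (R ⧸ Q) := inferInstance
  let L : R ⧸ Q →ₐ[R' ⧸ P] K := IsAlgClosed.lift
  refine ⟨L.toRingHom.comp (Ideal.Quotient.mk Q), ?_⟩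
  ext x
  exact L.commutes (Ideal.Quotient.mk P x)

theorem aux_indep (R : Type*) [CommRing R] (K : Type*) [Field K] :
    LinearIndependent K (fun φ : R →+* K => (φ.toAddMonoidHom.toIntLinearMap : R →ₗ[ℤ] K)) := by
  have h := (linearIndependent_monoidHom R K).comp (fun φ : R →+* K => (φ : R →* K))
    (fun a b h => RingHom.ext (fun x => DFunLike.congr_fun h x))
  let c : (R →ₗ[ℤ] K) →ₗ[K] (R → K) :=
    { toFun := fun f => f, map_add' := fun _ _ => rfl, map_smul' := fun _ _ => rfl }
  exact LinearIndependent.of_comp c h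


theorem aux_main (R' R : Type*) [CommRing R'] [CommRing R]
    [Module.Free ℤ R] [Module.Finite ℤ R]
    (ι : R' →+* R) (hinj : Function.Injective ι)
    (hdfin : Finite (R ⧸ ι.toAddMonoidHom.range))
    (p : ℕ) [hp : Fact p.Prime] (K : Type*) [Field K] [Algebra (ZMod p) K] [IsAlgClosed K] :
    Nat.card (R' →+* K) ≤ Nat.card (R →+* K) ∧
      (Nat.card (R →+* K) : ℤ) - (padicValNat p (Nat.card (R ⧸ ι.toAddMonoidHom.range)) : ℤ) ≤
        (Nat.card (R' →+* K) : ℤ) := by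
  have hsurj := aux_surj R' R ι hinj K
  have hind := aux_indep R K
  have : Finite (R →+* K) := hind.finite
  have : Finite (R' →+* K) := Finite.of_surjective _ hsurj
  refine ⟨Nat.card_le_card_of_surjective _ hsurj, ?_⟩
  obtain ⟨r, a, hr, ha⟩ := aux_gens p K (R ⧸ ι.toAddMonoidHom.range)
  choose s hs using fun i => QuotientAddGroup.mk_surjective (a i)
  suffices h : Nat.card (R →+* K) ≤ Nat.card (R' →+* K) + r by omega
  let Φ : (R →ₗ[ℤ] K) →ₗ[K] (R' → K) × (Fin r → K) :=
    { toFun := fun f => (fun x => f (ι x), fun i => f (s i))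
      map_add' := fun _ _ => rfl
      map_smul' := fun _ _ => rfl }
  have hΦ : LinearMap.ker Φ = ⊥ := by
    rw [LinearMap.ker_eq_bot']
    intro f hf
    have h1 : ∀ x, f (ι x) = 0 := fun x => congrFun (congrArg Prod.fst hf) x
    have h2 : ∀ i, f (s i) = 0 := fun i => congrFun (congrArg Prod.snd hf) i
    have hle : ι.toAddMonoidHom.range ≤ f.toAddMonoidHom.ker := by
      rintro _ ⟨x, rfl⟩
      exact h1 x
    have h3 := ha (QuotientAddGroup.lift _ f.toAddMonoidHom hle) (fun i => by
      rw [← hs]; exact h2 i)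
    ext x
    exact DFunLike.congr_fun h3 (QuotientAddGroup.mk x)
  have hind2 := hind.map' Φ hΦ
  have := Fintype.ofFinite (R →+* K)
  have := Fintype.ofFinite (R' →+* K)
  let S : Submodule K (R' → K) := Submodule.span K (Set.range (fun (ψ : R' →+* K) => (ψ : R' → K)))
  have : Module.Finite K S := Module.Finite.span_of_finite K (Set.finite_range _)
  let v : (R →+* K) → S × (Fin r → K) := fun φ =>
    (⟨fun x => φ (ι x), Submodule.subset_span ⟨φ.comp ι, rfl⟩⟩, fun i => φ (s i))
  have hv : LinearIndependent K v :=
    LinearIndependent.of_comp (S.subtype.prodMap LinearMap.id) hind2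
  have h4 := hv.fintype_card_le_finrank
  have h5 : Module.finrank K S ≤ Fintype.card (R' →+* K) := finrank_range_le_card _
  rw [Module.finrank_prod, Module.finrank_fin_fun] at h4
  rw [Nat.card_eq_fintype_card, Nat.card_eq_fintype_card]
  omega

/-- If `ι : R' → R` is an injective ring homomorphism of finite `S_ℚ`-rings
whose cokernel (as an abelian group) is finite of cardinality `d`, then the numbers of ring
homomorphisms to `F̄_p` satisfy `f_p ≥ f_p' ≥ f_p - ν_p(d)`. -/
theorem stmt_3 (R' R : Type*) [CommRing R'] [CommRing R]
    [Module.Free ℤ R'] [Module.Finite ℤ R'] [IsReduced R']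
    [Module.Free ℤ R] [Module.Finite ℤ R] [IsReduced R]
    (ι : R' →+* R) (hinj : Function.Injective ι)
    (d : ℕ) (hdfin : Finite (R ⧸ ι.toAddMonoidHom.range))
    (hd : d = Nat.card (R ⧸ ι.toAddMonoidHom.range))
    (p : ℕ) [hp : Fact p.Prime]
    (fp fp' : ℕ)
    (hfp : fp = Nat.card (R →+* AlgebraicClosure (ZMod p)))
    (hfp' : fp' = Nat.card (R' →+* AlgebraicClosure (ZMod p))) :
    fp' ≤ fp ∧ (fp : ℤ) - (padicValNat p d : ℤ) ≤ (fp' : ℤ) := by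
  subst hfp hfp' hd
  exact aux_main R' R ι hinj hdfin p (AlgebraicClosure (ZMod p))
end

section
/- Let h(x) ∈ ℤ[x] be a monic polynomial of degree n whose discriminant δ_h is nonzero, and let p be a prime with ν_p(δ_h) ≤ 1. Then the number of distinct roots in F̄_p of the reduction of h(x) modulo p equals n − ν_p(δ_h). -/
open scoped Classical

open Polynomial in
lemma aux_det_aeval {K : Type*} [Field K] [IsAlgClosed K] {n : ℕ} (A : Matrix (Fin n) (Fin n) K)
    (f : K[X]) : (aeval A f).det = (A.charpoly.roots.map (fun a => f.eval a)).prod := by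
  have hs := IsAlgClosed.splits A.charpoly
  have hcard : A.charpoly.roots.card = n := by
    rw [← hs.natDegree_eq_card_roots, A.charpoly_natDegree_eq_dim, Fintype.card_fin]
  have hlin : ∀ b : K, (aeval A (X - C b)).det =
      (A.charpoly.roots.map (fun a => (X - C b).eval a)).prod := by
    intro b
    have h1 : A.charpoly.eval b = (A.charpoly.roots.map (fun a => b - a)).prod := by
      conv_lhs => rw [hs.eq_prod_roots_of_monic A.charpoly_monic]
      rw [eval_multiset_prod, Multiset.map_map]
      simp
    have h2 : aeval A (X - C b) = -(Matrix.scalar (Fin n) b - A) := by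
      simp [Algebra.algebraMap_eq_smul_one, Matrix.smul_one_eq_diagonal]
    rw [h2, Matrix.det_neg, ← Matrix.eval_charpoly, h1, Fintype.card_fin]
    have h3 : (fun a => (X - C b).eval a) = fun a => (-1) * (b - a) := by
      ext a; simp
    rw [h3, Multiset.prod_map_mul]
    simp [hcard]
  have hf := (IsAlgClosed.splits f).eq_prod_roots
  have key : ∀ s : Multiset K, (aeval A (s.map (fun b => X - C b)).prod).det =
      (A.charpoly.roots.map (fun a => (s.map (fun b => X - C b)).prod.eval a)).prod := by
    intro s
    induction s using Multiset.induction with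
    | empty => simp
    | cons b s ih =>
      simp only [Multiset.map_cons, Multiset.prod_cons, map_mul, Matrix.det_mul, ih, hlin b,
        eval_mul, Multiset.prod_map_mul]
  rw [hf]
  simp only [map_mul, Matrix.det_mul, key, eval_mul, Multiset.prod_map_mul, eval_C]
  simp [hcard, Algebra.algebraMap_eq_smul_one]

open Polynomial in
lemma aux_trace_pow {K : Type*} [Field K] [IsAlgClosed K] {n : ℕ} (A : Matrix (Fin n) (Fin n) K)
    (k : ℕ) : (A ^ k).trace = (A.charpoly.roots.map (fun a => a ^ k)).sum := by
  have h : (A ^ k).charpoly = ((A.charpoly.roots.map (fun a => a ^ k)).map (fun a => X - C a)).prod := by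
    apply Polynomial.funext
    intro r
    have h2 : aeval A (C r - X ^ k) = (Matrix.scalar (Fin n) r - A ^ k) := by
      simp [Algebra.algebraMap_eq_smul_one, Matrix.smul_one_eq_diagonal]
    rw [Matrix.eval_charpoly, ← h2, aux_det_aeval, eval_multiset_prod, Multiset.map_map,
      Multiset.map_map]
    simp
  rw [Matrix.trace_eq_sum_roots_charpoly, h, roots_multiset_prod_X_sub_C]

lemma aux_adj {K : Type*} [Field K] {n : ℕ} (r : Fin n → K)
    (h : (Finset.univ.image r).card + 2 ≤ n) : (Matrix.vandermonde r).adjugate = 0 := by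
  ext i j
  rw [Matrix.adjugate_apply]
  have : ∃ a ∈ Finset.univ.erase j, ∃ b ∈ Finset.univ.erase j, a ≠ b ∧ r a = r b := by
    apply Finset.exists_ne_map_eq_of_card_lt_of_maps_to (t := Finset.univ.image r)
    · rw [Finset.card_erase_of_mem (Finset.mem_univ _), Finset.card_univ, Fintype.card_fin]; omega
    · intro a _; simp
  obtain ⟨a, ha, b, hb, hab, hr⟩ := this
  apply Matrix.det_zero_of_row_eq hab
  rw [Matrix.updateRow_ne (Finset.ne_of_mem_erase ha), Matrix.updateRow_ne (Finset.ne_of_mem_erase hb)]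
  ext c; simp [Matrix.vandermonde, hr]

/-- integer matrix whose reduction has zero adjugate -/
lemma aux_sq {n : ℕ} (hn : 2 ≤ n) (T : Matrix (Fin n) (Fin n) ℤ) (hT : T.det ≠ 0) (p : ℕ)
    [hp : Fact p.Prime] (h : ∀ i j, (p : ℤ) ∣ T.adjugate i j) : 2 ≤ padicValInt p T.det := by
  choose B hB using h
  have h1 : T.adjugate = (p : ℤ) • Matrix.of B := by
    ext i j; simp [hB i j]
  have h2 := T.det_adjugate
  rw [h1, Matrix.det_smul, Fintype.card_fin] at h2
  have hd : (p : ℤ) ^ n ∣ T.det ^ (n - 1) := ⟨_, h2.symm⟩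
  by_contra hlt
  have h3 := (padicValInt_dvd_iff n (T.det ^ (n-1))).1 hd
  rcases h3 with h3 | h3
  · exact hT (pow_eq_zero_iff (by omega) |>.1 h3)
  · have : padicValInt p (T.det ^ (n-1)) = (n-1) * padicValInt p T.det := by
      unfold padicValInt
      rw [Int.natAbs_pow, padicValNat.pow]
    rw [this] at h3
    have : padicValInt p T.det ≤ 1 := by omega
    have := Nat.mul_le_mul_left (n-1) this
    omega

open Polynomial in
lemma aux_charpoly (h : ℤ[X]) (hm : h.Monic) :
    (Algebra.leftMulMatrix (AdjoinRoot.powerBasis' hm).basis (AdjoinRoot.root h)).charpoly = h := by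
  set pb := AdjoinRoot.powerBasis' hm
  set M := Algebra.leftMulMatrix pb.basis (AdjoinRoot.root h)
  have h0 : aeval (AdjoinRoot.root h) M.charpoly = 0 := by
    apply Algebra.leftMulMatrix_injective pb.basis
    rw [← Polynomial.aeval_algHom_apply, Matrix.aeval_self_charpoly, map_zero]
  rw [AdjoinRoot.aeval_eq, AdjoinRoot.mk_eq_zero] at h0
  refine (eq_of_monic_of_dvd_of_natDegree_le hm M.charpoly_monic h0 ?_)
  rw [M.charpoly_natDegree_eq_dim, Fintype.card_fin]
  exact le_of_eq (AdjoinRoot.powerBasis'_dim hm)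

open Polynomial in
lemma aux_T (h : ℤ[X]) (hm : h.Monic) (K : Type*) [Field K] [IsAlgClosed K]
    (r : Fin (AdjoinRoot.powerBasis' hm).dim → K)
    (hr : (h.map (Int.castRingHom K)).roots = Finset.univ.val.map r) :
    (Algebra.traceMatrix ℤ (AdjoinRoot.powerBasis' hm).basis).map (Int.castRingHom K) =
      (Matrix.vandermonde r).transpose * Matrix.vandermonde r := by
  set pb := AdjoinRoot.powerBasis' hm
  ext i j
  have hg : pb.gen = AdjoinRoot.root h := rfl
  rw [Matrix.map_apply, Algebra.traceMatrix_apply, Algebra.traceForm_apply, pb.basis_eq_pow,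
    pb.basis_eq_pow, ← pow_add, Algebra.trace_eq_matrix_trace pb.basis, map_pow, hg]
  have hc := aux_charpoly h hm
  set M := Algebra.leftMulMatrix pb.basis (AdjoinRoot.root h)
  have h1 : (Int.castRingHom K) (M ^ (i + j : ℕ)).trace =
      (((Int.castRingHom K).mapMatrix M) ^ (i + j : ℕ)).trace := by
    rw [← map_pow (Int.castRingHom K).mapMatrix, AddMonoidHom.map_trace]; rfl
  rw [h1, aux_trace_pow, RingHom.mapMatrix_apply, Matrix.charpoly_map, hc, hr, Multiset.map_map]
  rw [Matrix.mul_apply]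
  refine Finset.sum_congr rfl fun c _ => ?_
  simp [Matrix.vandermonde, pow_add]

theorem stmt_10 (h : Polynomial ℤ) (hmonic : h.Monic) (n : ℕ) (hn : n = h.natDegree)
    (δh : ℤ) (hδh : δh = Algebra.discr ℤ (AdjoinRoot.powerBasis' hmonic).basis)
    (hδh0 : δh ≠ 0)
    (p : ℕ) [hp : Fact p.Prime] (hval : padicValInt p δh ≤ 1) :
    ((h.map (Int.castRingHom (AlgebraicClosure (ZMod p)))).roots.toFinset.card : ℤ) =
      (n : ℤ) - (padicValInt p δh : ℤ) := by
  set K := AlgebraicClosure (ZMod p)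
  have : CharP K p := inferInstance
  have hdim : (AdjoinRoot.powerBasis' hmonic).dim = n := by
    rw [AdjoinRoot.powerBasis'_dim, hn]
  have hcard : (h.map (Int.castRingHom K)).roots.card = (AdjoinRoot.powerBasis' hmonic).dim := by
    rw [← (IsAlgClosed.splits _).natDegree_eq_card_roots, hmonic.natDegree_map, hdim, hn]
  obtain ⟨r, hr⟩ : ∃ r : Fin (AdjoinRoot.powerBasis' hmonic).dim → K,
      (h.map (Int.castRingHom K)).roots = Finset.univ.val.map r := by
    rw [← hcard]
    generalize (h.map (Int.castRingHom K)).roots = s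
    induction s using Quotient.inductionOn with
    | h l =>
      refine ⟨fun i => l.get i, ?_⟩
      rw [Fin.univ_val_map]
      exact congrArg _ (List.ofFn_get l).symm
  have hT := aux_T h hmonic K r hr
  rw [Algebra.discr_def] at hδh
  have himg : (h.map (Int.castRingHom K)).roots.toFinset = Finset.univ.image r := by
    rw [hr]; rfl
  rw [himg]
  revert hδh hT himg hr hcard hdim r
  generalize Algebra.traceMatrix ℤ (AdjoinRoot.powerBasis' hmonic).basis = T
  revert T
  generalize (AdjoinRoot.powerBasis' hmonic).dim = m
  intro T hδh hdim hcard r hr hT himg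
  subst hdim
  subst hδh
  have hle : (Finset.univ.image r).card ≤ m := by
    simpa using Finset.card_image_le (s := Finset.univ) (f := r)
  have hdet : ((T.det : ℤ) : K) = (Matrix.vandermonde r).det ^ 2 := by
    have := congrArg Matrix.det hT
    rw [Matrix.det_mul, Matrix.det_transpose, ← pow_two] at this
    rw [← this]
    exact (Int.castRingHom K).map_det T
  have hinj : (Finset.univ.image r).card = m ↔ ¬ (p : ℤ) ∣ T.det := by
    rw [← CharP.intCast_eq_zero_iff K p, hdet, pow_eq_zero_iff two_ne_zero, ← Ne,
      Matrix.det_vandermonde_ne_zero_iff, ← Set.injOn_univ, ← Finset.coe_univ,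
      ← Finset.card_image_iff, Finset.card_univ, Fintype.card_fin]
  have hv : (p : ℤ) ∣ T.det ↔ 1 ≤ padicValInt p T.det := by
    have := padicValInt_dvd_iff (p := p) 1 T.det
    simpa [hδh0] using this
  by_cases h0 : (p : ℤ) ∣ T.det
  · have hv1 := hv.1 h0
    have hlt : (Finset.univ.image r).card ≠ m := fun hh => hinj.1 hh h0
    have hge : ¬ (Finset.univ.image r).card + 2 ≤ m := by
      intro hh
      have hadj := aux_adj r hh
      have : 2 ≤ padicValInt p T.det := by
        apply aux_sq (by omega) T hδh0 p
        intro i j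
        rw [← CharP.intCast_eq_zero_iff K p]
        have h1 := (Int.castRingHom K).map_adjugate T
        rw [RingHom.mapMatrix_apply, RingHom.mapMatrix_apply, hT, Matrix.adjugate_mul_distrib, hadj,
          zero_mul] at h1
        exact congrFun (congrFun h1 i) j
      omega
    omega
  · have := hinj.2 h0
    have : ¬ 1 ≤ padicValInt p T.det := fun hh => h0 (hv.2 hh)
    omega
end
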